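/- (Sphere-packing converse for the q-ary symmetric channel) Let q ≥ 2, n ≥ 1, M ≥ 1, and 0 ≤ ε ≤ 1/q. Consider the q-ary symmetric channel on alphabet Fin q with per-letter transition probability W(y|x) = 1 − (q−1)ε if y = x and W(y|x) = ε otherwise, used memorylessly n times. Let A_t := q^n/M − Σ_{j=0}^{t−1} C(n,j)·(q−1)^j for t ∈ {0, 1, …, n}, and let t* be the largest t ∈ {0, 1, …, n} with A_t ≥ 0. Then for every code x_1, …, x_M ∈ (Fin q)^n and every decoder g : (Fin q)^n → {1, …, M}, the average success probability satisfies (1/M)·Σ_{m=1}^{M} Σ_{y : g(y)=m} ε^{d(y, x_m)}·(1−(q−1)ε)^{n−d(y, x_m)} ≤ Σ_{j=0}^{t*−1} C(n,j)·(q−1)^j·ε^j·(1−(q−1)ε)^{n−j} + A_{t*}·ε^{t*}·(1−(q−1)ε)^{n−t*}, where d(·,·) denotes Hamming distance. -/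

import Mathlib

/-- The number of words that differ from `x` exactly in the positions of `S`. -/
theorem card_filter_ne_positions_eq {ι α : Type*} [Fintype ι] [DecidableEq ι] [Fintype α]
    [DecidableEq α] (x : ι → α) (S : Finset ι) :
    (Finset.univ.filter fun y : ι → α => (Finset.univ.filter fun i => y i ≠ x i) = S).card
      = (Fintype.card α - 1) ^ S.card := by
  have h : (Finset.univ.filter fun y : ι → α => (Finset.univ.filter fun i => y i ≠ x i) = S)
      = Fintype.piFinset fun i => if i ∈ S then {x i}ᶜ else {x i} := by
    ext y
    simp only [Finset.mem_filter, Finset.mem_univ, true_and, Fintype.mem_piFinset,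
      Finset.ext_iff]
    refine forall_congr' fun i => ?_
    by_cases hi : i ∈ S <;> simp [hi]
  have h_card (i : ι) : (if i ∈ S then ({x i}ᶜ : Finset α) else {x i}).card
      = if i ∈ S then Fintype.card α - 1 else 1 := by
    split_ifs <;> simp [Finset.card_compl]
  rw [h, Fintype.card_piFinset]
  simp [h_card]

/-- Summing a function of the Hamming distance to `x` over all words, sphere by sphere. -/
theorem sum_apply_hammingDist {ι α R : Type*} [Fintype ι] [DecidableEq ι]
    [Fintype α] [DecidableEq α] [CommSemiring R] (x : ι → α) (F : ℕ → R) :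
    ∑ y, F (hammingDist y x) = ∑ j ∈ Finset.range (Fintype.card ι + 1),
      ((Fintype.card ι).choose j : R) * ((Fintype.card α - 1 : ℕ) : R) ^ j * F j := by
  have h := Finset.sum_powerset_apply_card
    (fun j => ((Fintype.card α - 1 : ℕ) : R) ^ j * F j) (x := (Finset.univ : Finset ι))
  simp only [Finset.card_univ, nsmul_eq_mul, ← mul_assoc] at h
  rw [← h, ← Finset.sum_fiberwise_of_maps_to
    (g := fun y => Finset.univ.filter fun i => y i ≠ x i) (t := Finset.univ.powerset) (by simp)]
  refine Finset.sum_congr rfl fun S _ => ?_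
  rw [Finset.sum_congr rfl (g := fun _ => F S.card), Finset.sum_const,
    card_filter_ne_positions_eq, nsmul_eq_mul, Nat.cast_pow]
  intro y hy
  rw [← (Finset.mem_filter.mp hy).2, hammingDist]

theorem pow_mul_pow_sub_le_of_le {a b : ℝ} (ha : 0 ≤ a) (hab : a ≤ b) {i j n : ℕ}
    (hij : i ≤ j) (hjn : j ≤ n) : a ^ j * b ^ (n - j) ≤ a ^ i * b ^ (n - i) := by
  have hb : 0 ≤ b := ha.trans hab
  calc a ^ j * b ^ (n - j) = a ^ i * (a ^ (j - i) * b ^ (n - j)) := by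
        rw [← mul_assoc, ← pow_add, Nat.add_sub_cancel' hij]
    _ ≤ a ^ i * (b ^ (j - i) * b ^ (n - j)) := by gcongr
    _ = a ^ i * b ^ (n - i) := by rw [← pow_add]; congr 2; omega

/-- sphere-packing converse for the q-ary symmetric channel: for any
`(n, M)` code and decoder over the memoryless `q`-ary symmetric channel with per-letter
crossover probability `ε ≤ 1/q`, the average success probability is at most
`Σ_{j<t*} C(n,j)(q−1)^j ε^j (1−(q−1)ε)^{n−j} + A_{t*} ε^{t*} (1−(q−1)ε)^{n−t*}`,
where `A_t = qⁿ/M − Σ_{j<t} C(n,j)(q−1)^j` and `t*` is the largest `t ≤ n` with `A_t ≥ 0`. -/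
theorem stmt13 (q n M : ℕ) (hq : 2 ≤ q) (hn : 1 ≤ n) (hM : 1 ≤ M)
    (ε : ℝ) (hε0 : 0 ≤ ε) (hε1 : ε ≤ 1 / q)
    (A : ℕ → ℝ)
    (hA : ∀ t, A t = (q : ℝ) ^ n / M -
      ∑ j ∈ Finset.range t, (n.choose j : ℝ) * ((q : ℝ) - 1) ^ j)
    (tstar : ℕ) (ht_le : tstar ≤ n) (ht_nonneg : 0 ≤ A tstar)
    (ht_max : ∀ t, t ≤ n → 0 ≤ A t → t ≤ tstar)
    (x : Fin M → (Fin n → Fin q)) (g : (Fin n → Fin q) → Fin M) :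
    (M : ℝ)⁻¹ * ∑ m, ∑ y ∈ Finset.univ.filter (fun y => g y = m),
        ε ^ hammingDist y (x m) * (1 - ((q : ℝ) - 1) * ε) ^ (n - hammingDist y (x m))
      ≤ (∑ j ∈ Finset.range tstar,
          (n.choose j : ℝ) * ((q : ℝ) - 1) ^ j * ε ^ j * (1 - ((q : ℝ) - 1) * ε) ^ (n - j))
        + A tstar * ε ^ tstar * (1 - ((q : ℝ) - 1) * ε) ^ (n - tstar) := by

  set b : ℝ := 1 - ((q : ℝ) - 1) * ε with hb
  have hq0 : (0 : ℝ) < q := by exact_mod_cast (by omega : 0 < q)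
  have hM0 : (0 : ℝ) < M := by exact_mod_cast hM
  have hεb : ε ≤ b := by
    have := (le_div_iff₀ hq0).mp hε1
    rw [hb]
    linarith
  set c : ℕ → ℝ := fun j => ε ^ j * b ^ (n - j) with hc
  have hc_anti {i j : ℕ} (hij : i ≤ j) (hj : j ≤ n) : c j ≤ c i :=
    pow_mul_pow_sub_le_of_le hε0 hεb hij hj
  set F : ℕ → ℝ := fun j => if j < tstar then c j - c tstar else 0 with hF
  have hF_nonneg (j : ℕ) : 0 ≤ F j := by
    simp only [hF]
    split_ifs with h
    · exact sub_nonneg.mpr (hc_anti h.le ht_le)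
    · exact le_rfl
  have hF_ge {j : ℕ} (hj : j ≤ n) : c j - c tstar ≤ F j := by
    simp only [hF]
    split_ifs with h
    · exact le_rfl
    · exact sub_nonpos.mpr (hc_anti (not_lt.mp h) hj)
  have h_sum (m : Fin M) : ∑ y, F (hammingDist y (x m))
      = ∑ j ∈ Finset.range tstar,
          (n.choose j : ℝ) * ((q : ℝ) - 1) ^ j * (c j - c tstar) := by
    rw [sum_apply_hammingDist]
    simp only [Fintype.card_fin, Nat.cast_sub (by omega : 1 ≤ q), Nat.cast_one]
    rw [← Finset.sum_subset (Finset.range_subset_range.mpr (by omega : tstar ≤ n + 1))]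
    · refine Finset.sum_congr rfl fun j hj => ?_
      simp [hF, Finset.mem_range.mp hj]
    · intro j _ hj
      simp only [Finset.mem_range] at hj
      simp [hF, hj]
  have h_region (m : Fin M) :
      ∑ y ∈ Finset.univ.filter (fun y => g y = m), c (hammingDist y (x m))
        ≤ ∑ y, F (hammingDist y (x m))
          + ∑ y ∈ Finset.univ.filter (fun y => g y = m), c tstar := by
    rw [← sub_le_iff_le_add, ← Finset.sum_sub_distrib]
    calc _ ≤ ∑ y ∈ Finset.univ.filter (fun y => g y = m), F (hammingDist y (x m)) :=
          Finset.sum_le_sum fun y _ =>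
            hF_ge (by simpa using hammingDist_le_card_fintype (x := y) (y := x m))
      _ ≤ _ := Finset.sum_le_univ_sum_of_nonneg fun y => hF_nonneg _
  have h_total : ∑ m, ∑ y ∈ Finset.univ.filter (fun y => g y = m), c tstar
      = (q : ℝ) ^ n * c tstar := by
    rw [Finset.sum_fiberwise]
    simp
  calc _ ≤ (M : ℝ)⁻¹ * ∑ m, (∑ y, F (hammingDist y (x m))
          + ∑ y ∈ Finset.univ.filter (fun y => g y = m), c tstar) :=
        mul_le_mul_of_nonneg_left (Finset.sum_le_sum fun m _ => h_region m) (by positivity)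
    _ = ∑ j ∈ Finset.range tstar, (n.choose j : ℝ) * ((q : ℝ) - 1) ^ j * (c j - c tstar)
          + (q : ℝ) ^ n / M * c tstar := by
        rw [Finset.sum_add_distrib, h_total]
        simp only [h_sum, Finset.sum_const, Finset.card_univ, Fintype.card_fin, nsmul_eq_mul]
        field_simp
    _ = _ := by
        rw [hA]
        simp only [mul_sub, Finset.sum_sub_distrib, ← Finset.sum_mul, mul_assoc _ (ε ^ _), sub_mul]
        ring
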